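/- arXiv:1106.1588 — 6 statements merged into one kernel-verified Lean document; each statement's English description precedes it below -/
import Mathlib

section
/- Let A be a commutative ring, let γ, δ, s, t ∈ A, let q(X,Y) = X² + γXY + δY², and set x = q(X,Y) − q(s,t) in B = A[X,Y]. Define the 2×2 matrices over B: φ = [[δY + δt + γX, X + s + γt], [−(X − s), Y − t]] and ψ = [[Y − t, −(X + s + γt)], [X − s, δY + δt + γX]]. Then φ·ψ = ψ·φ = x·I, where I is the 2×2 identity matrix; that is, (φ, ψ) is a matrix factorization of the element x. -/
/-!
Every square matrix forms a matrix factorization of its determinant together with its adjugate.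
Here `ψ` is the adjugate of `φ`, and expanding `det φ` turns the claim into the factorization
`q(X,Y) - q(s,t) = (X - s)(X + s + γt) + (Y - t)(δY + δt + γX)`, obtained by passing from `(s,t)`
to `(X,Y)` through `(X,t)`: the two steps are divisible by `X - s` and `Y - t` respectively.
-/

open MvPolynomial

section MatrixFactorization

variable {R : Type*} [CommRing R]

/-- A matrix factorization of a ring element `x`: a pair of square matrices whose products in both
orders are the scalar matrix `x`. As `x` may be a zero divisor, neither
equation implies the other and both are recorded. -/
def IsMatrixFactorization {n : Type*} [Fintype n] [DecidableEq n] (x : R)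
    (φ ψ : Matrix n n R) : Prop :=
  φ * ψ = x • (1 : Matrix n n R) ∧ ψ * φ = x • (1 : Matrix n n R)

theorem isMatrixFactorization_det_adjugate {n : Type*} [Fintype n] [DecidableEq n]
    (M : Matrix n n R) : IsMatrixFactorization M.det M M.adjugate :=
  ⟨M.mul_adjugate, M.adjugate_mul⟩

theorem isMatrixFactorization_fin_two_of (a b c d : R) :
    IsMatrixFactorization (a * d - b * c) !![a, b; c, d] !![d, -b; -c, a] := by
  rw [← Matrix.det_fin_two_of, ← Matrix.adjugate_fin_two_of]
  exact isMatrixFactorization_det_adjugate _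

theorem binaryQuadratic_sub_eq_mul_add_mul (γ δ s t u v : R) :
    u ^ 2 + γ * u * v + δ * v ^ 2 - (s ^ 2 + γ * s * t + δ * t ^ 2) =
      (u - s) * (u + s + γ * t) + (v - t) * (δ * v + δ * t + γ * u) := by
  have first_variable : u ^ 2 + γ * u * t + δ * t ^ 2 - (s ^ 2 + γ * s * t + δ * t ^ 2) =
      (u - s) * (u + s + γ * t) := by ring
  have second_variable : u ^ 2 + γ * u * v + δ * v ^ 2 - (u ^ 2 + γ * u * t + δ * t ^ 2) =
      (v - t) * (δ * v + δ * t + γ * u) := by ring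
  rw [← first_variable, ← second_variable, sub_add_sub_cancel']

theorem stmt5_general (γ δ s t u v : R) :
    IsMatrixFactorization
      (u ^ 2 + γ * u * v + δ * v ^ 2 - (s ^ 2 + γ * s * t + δ * t ^ 2))
      !![δ * v + δ * t + γ * u, u + s + γ * t; -(u - s), v - t]
      !![v - t, -(u + s + γ * t); u - s, δ * v + δ * t + γ * u] := by
  have det_eq : u ^ 2 + γ * u * v + δ * v ^ 2 - (s ^ 2 + γ * s * t + δ * t ^ 2) =
      (δ * v + δ * t + γ * u) * (v - t) - (u + s + γ * t) * -(u - s) := by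
    rw [binaryQuadratic_sub_eq_mul_add_mul]
    ring
  rw [det_eq]
  simpa only [neg_neg] using
    isMatrixFactorization_fin_two_of (δ * v + δ * t + γ * u) (u + s + γ * t) (-(u - s)) (v - t)

end MatrixFactorization

/-- Matrix factorization: with `B = A[X,Y]`, `x = q(X,Y) - q(s,t)` where
`q(X,Y) = X² + γXY + δY²`, and
`φ = [[δY + δt + γX, X + s + γt], [-(X - s), Y - t]]`,
`ψ = [[Y - t, -(X + s + γt)], [X - s, δY + δt + γX]]`,
one has `φψ = ψφ = x·1`. -/
theorem stmt5 {A : Type*} [CommRing A] (γ δ s t : A)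
    (x : MvPolynomial (Fin 2) A)
    (hx : x = X 0 ^ 2 + C γ * X 0 * X 1 + C δ * X 1 ^ 2
      - C (s ^ 2 + γ * s * t + δ * t ^ 2))
    (φ ψ : Matrix (Fin 2) (Fin 2) (MvPolynomial (Fin 2) A))
    (hφ : φ = !![C δ * X 1 + C (δ * t) + C γ * X 0, X 0 + C s + C (γ * t);
                 -(X 0 - C s), X 1 - C t])
    (hψ : ψ = !![X 1 - C t, -(X 0 + C s + C (γ * t));
                 X 0 - C s, C δ * X 1 + C (δ * t) + C γ * X 0]) :
    φ * ψ = x • (1 : Matrix (Fin 2) (Fin 2) (MvPolynomial (Fin 2) A)) ∧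
    ψ * φ = x • (1 : Matrix (Fin 2) (Fin 2) (MvPolynomial (Fin 2) A)) := by
  subst hx hφ hψ
  simp only [map_add, map_mul, map_pow]
  exact stmt5_general (C γ) (C δ) (C s) (C t) (X 0) (X 1)
end

section
/- Let A be a commutative ring, let γ, δ, s, t ∈ A, let q(X,Y) = X² + γXY + δY², let R = A[X,Y]/(q(X,Y) − q(s,t)), and let u, v be the images of X, Y in R. Then v − t is not a zero-divisor in R; that is, for every r ∈ R, (v − t)·r = 0 implies r = 0. -/
noncomputable section
open MvPolynomial

/-- `q(X,Y) - q(s,t)` in `A[X,Y]`, where `q(X,Y) = X² + γXY + δY²`. -/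
def keyRel (A : Type*) [CommRing A] (γ δ s t : A) : MvPolynomial (Fin 2) A :=
  X 0 ^ 2 + C γ * X 0 * X 1 + C δ * X 1 ^ 2 - C (s ^ 2 + γ * s * t + δ * t ^ 2)

/-- `R = A[X,Y]/(q(X,Y) - q(s,t))`. -/
abbrev KeyRing (A : Type*) [CommRing A] (γ δ s t : A) :=
  MvPolynomial (Fin 2) A ⧸ Ideal.span {keyRel A γ δ s t}

/-!
The relation `q(X,Y) - q(s,t)` is monic in `X`, so `R` is free over `A[Y]`, and regular elements of
`A[Y]`, such as the monic polynomial `Y - t`, therefore act injectively on `R`.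
-/

theorem isRegular_quotientMk_C_of_monic {B : Type*} [CommRing B] {g : Polynomial B} (hg : g.Monic)
    {b : B} (hb : IsRegular b) :
    IsRegular (Ideal.Quotient.mk (Ideal.span {g}) (Polynomial.C b)) := by
  have hfree : Module.Free B (Polynomial B ⧸ Ideal.span {g}) := hg.free_quotient
  exact isLeftRegular_iff_isRegular.1 hb.left.isSMulRegular.of_flat.isLeftRegular

section

variable {A : Type*} [CommRing A]

variable (A) in
/-- The isomorphism `A[X,Y] ≃ A[Y][X]` that regards a polynomial in two variables as a polynomial
in the first one, so that being monic in `X` makes sense. Mathlib's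
`Polynomial.Bivariate.equivMvPolynomial` singles out the second variable, hence the swap. -/
def polynomialFstEquiv : MvPolynomial (Fin 2) A ≃ₐ[A] Polynomial (Polynomial A) :=
  (Polynomial.Bivariate.equivMvPolynomial A).symm.trans Polynomial.Bivariate.swap

theorem polynomialFstEquiv_C (a : A) :
    polynomialFstEquiv A (C a) = Polynomial.C (Polynomial.C a) := by
  rw [polynomialFstEquiv, AlgEquiv.trans_apply,
    Polynomial.Bivariate.equivMvPolynomial_symm_C, Polynomial.Bivariate.swap_C_C]

theorem polynomialFstEquiv_X_zero : polynomialFstEquiv A (X 0) = Polynomial.X := by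
  rw [polynomialFstEquiv, AlgEquiv.trans_apply,
    Polynomial.Bivariate.equivMvPolynomial_symm_X_0, Polynomial.Bivariate.swap_X]

theorem polynomialFstEquiv_X_one : polynomialFstEquiv A (X 1) = Polynomial.C Polynomial.X := by
  rw [polynomialFstEquiv, AlgEquiv.trans_apply,
    Polynomial.Bivariate.equivMvPolynomial_symm_X_1, Polynomial.Bivariate.swap_Y]

theorem polynomialFstEquiv_aeval_X_one (p : Polynomial A) :
    polynomialFstEquiv A (Polynomial.aeval (X 1) p) = Polynomial.C p := by
  rw [← Polynomial.aeval_algHom_apply, polynomialFstEquiv_X_one,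
    ← Polynomial.algebraMap_eq, Polynomial.aeval_algebraMap_apply, Polynomial.aeval_X_left_apply]

theorem isRegular_quotientMk_aeval_X_one {g : MvPolynomial (Fin 2) A}
    (hg : (polynomialFstEquiv A g).Monic) {p : Polynomial A} (hp : IsRegular p) :
    IsRegular (Ideal.Quotient.mk (Ideal.span {g}) (Polynomial.aeval (X 1) p)) := by
  let e := Ideal.quotientEquiv (Ideal.span {g}) (Ideal.span {polynomialFstEquiv A g})
    (polynomialFstEquiv A).toRingEquiv (by simp [Ideal.map_span])
  have he : e (Ideal.Quotient.mk _ (Polynomial.aeval (X 1) p)) =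
      Ideal.Quotient.mk _ (Polynomial.C p) :=
    congr_arg (Ideal.Quotient.mk _) (polynomialFstEquiv_aeval_X_one p)
  rw [← isLeftRegular_iff_isRegular, isLeftRegular_iff_right_eq_zero_of_mul]
  intro r hr
  have her : Ideal.Quotient.mk _ (Polynomial.C p) * e r = 0 := by rw [← he, ← map_mul, hr, map_zero]
  exact (map_eq_zero_iff e e.injective).1
    ((isRegular_quotientMk_C_of_monic hg hp).left.mul_left_eq_zero_iff.1 her)

theorem monic_polynomialFstEquiv_keyRel (γ δ s t : A) :
    (polynomialFstEquiv A (keyRel A γ δ s t)).Monic := by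
  have h : polynomialFstEquiv A (keyRel A γ δ s t) = Polynomial.X ^ 2 +
      (Polynomial.C (Polynomial.C γ * Polynomial.X) * Polynomial.X +
        Polynomial.C (Polynomial.C δ * Polynomial.X ^ 2 -
          Polynomial.C (s ^ 2 + γ * s * t + δ * t ^ 2))) := by
    simp only [keyRel, map_sub, map_add, map_mul, map_pow, polynomialFstEquiv_C,
      polynomialFstEquiv_X_zero, polynomialFstEquiv_X_one]
    ring
  rw [h]
  exact Polynomial.monic_X_pow_add Polynomial.degree_linear_lt

theorem stmt7_general (γ δ s t : A) {p : Polynomial A} (hp : IsRegular p) :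
    IsRegular (Ideal.Quotient.mk (Ideal.span {keyRel A γ δ s t}) (Polynomial.aeval (X 1) p)) :=
  isRegular_quotientMk_aeval_X_one (monic_polynomialFstEquiv_keyRel γ δ s t) hp

end

/-- In `R = A[X,Y]/(q(X,Y) - q(s,t))` the element `v - t` is not a zero-divisor: for
every `r ∈ R`, `(v - t)·r = 0` implies `r = 0`. -/
theorem stmt7 {A : Type*} [CommRing A] (γ δ s t : A) :
    ∀ r : KeyRing A γ δ s t,
      Ideal.Quotient.mk (Ideal.span {keyRel A γ δ s t}) (X 1 - C t) * r = 0 → r = 0 := by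
  have hreg := stmt7_general γ δ s t (Polynomial.monic_X_sub_C t).isRegular
  exact fun r hr ↦ hreg.left.mul_left_eq_zero_iff.1 (by simpa [algebraMap_eq] using hr)
end
end

section
/- Let A be a commutative ring, let γ, δ, s, t ∈ A, let q(X,Y) = X² + γXY + δY², let R = A[X,Y]/(q(X,Y) − q(s,t)), and let u, v be the images of X, Y in R. Let α and β be the R-linear endomorphisms of R² given by the matrices α = [[δv + δt + γu, u + s + γt], [−(u − s), v − t]] and β = [[v − t, −(u + s + γt)], [u − s, δv + δt + γu]]. Then the doubly infinite periodic sequence ⋯ → R² →β R² →α R² →β R² → ⋯ is exact; that is, the image of α equals the kernel of β and the image of β equals the kernel of α. -/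
noncomputable section
open MvPolynomial

/-- The quotient map `A[X,Y] → R`. -/
def kmk (A : Type*) [CommRing A] (γ δ s t : A) :
    MvPolynomial (Fin 2) A →+* KeyRing A γ δ s t :=
  Ideal.Quotient.mk (Ideal.span {keyRel A γ δ s t})

/-!
Over `A[X,Y]`, the lift of `α` has determinant `q(X,Y) - q(s,t)` and its adjugate lifts `β`, so
the two lifts `M`, `N` satisfy `M * N = N * M = f • 1` with `f = q(X,Y) - q(s,t)`. Modulo `f` the
products vanish. Conversely, if `N *ᵥ x` vanishes modulo `f`, write `N *ᵥ x = f • y`; then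
`f • x = M *ᵥ N *ᵥ x = f • M *ᵥ y`, and `f` cancels since it is monic in `X`.
-/

open scoped Matrix nonZeroDivisors

section MatrixFactorization

variable {P Q m n : Type*} [CommRing P] [CommRing Q] [Fintype m] [Fintype n]
  [DecidableEq m] [DecidableEq n] {f : P} {M : Matrix m n P} {N : Matrix n m P}

/-- A matrix factorization of a ring element `f`, in the sense of Eisenbud: a pair of matrices
whose products in both orders are `f` times the identity. -/
structure IsMatrixFactorization_s8 (f : P) (M : Matrix m n P) (N : Matrix n m P) : Prop where
  mul_eq_smul_one : M * N = f • (1 : Matrix m m P)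
  mul_eq_smul_one' : N * M = f • (1 : Matrix n n P)

theorem isMatrixFactorization_adjugate (M : Matrix n n P) :
    IsMatrixFactorization_s8 M.det M M.adjugate :=
  ⟨M.mul_adjugate, M.adjugate_mul⟩

namespace IsMatrixFactorization_s8

theorem symm (h : IsMatrixFactorization_s8 f M N) : IsMatrixFactorization_s8 f N M :=
  ⟨h.mul_eq_smul_one', h.mul_eq_smul_one⟩

theorem range_mulVecLin_map_le_ker (h : IsMatrixFactorization_s8 f M N) {π : P →+* Q}
    (hf : π f = 0) :
    LinearMap.range (M.map π).mulVecLin ≤ LinearMap.ker (N.map π).mulVecLin := by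
  have hNM : N.map π * M.map π = 0 := by
    rw [← Matrix.map_mul, h.mul_eq_smul_one']
    ext i j
    simp [hf]
  rw [LinearMap.range_le_ker_iff, ← Matrix.mulVecLin_mul, hNM, Matrix.mulVecLin_zero]

theorem eq_mulVec_of_mulVec_eq_smul (h : IsMatrixFactorization_s8 f M N) (hf : f ∈ P⁰)
    {x : m → P} {y : n → P} (hxy : N *ᵥ x = f • y) : x = M *ᵥ y := by
  have hfx : f • x = f • (M *ᵥ y) := calc
    f • x = (M * N) *ᵥ x := by rw [h.mul_eq_smul_one, Matrix.smul_mulVec, Matrix.one_mulVec]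
    _ = M *ᵥ (f • y) := by rw [← Matrix.mulVec_mulVec, hxy]
    _ = f • (M *ᵥ y) := Matrix.mulVec_smul M f y
  exact funext fun i => (mul_cancel_left_mem_nonZeroDivisors hf).mp (congrFun hfx i)

theorem ker_mulVecLin_map_le_range (h : IsMatrixFactorization_s8 f M N) (hf : f ∈ P⁰)
    {π : P →+* Q} (hπ : Function.Surjective π) (hker : RingHom.ker π = Ideal.span {f}) :
    LinearMap.ker (N.map π).mulVecLin ≤ LinearMap.range (M.map π).mulVecLin := by
  intro x hx
  obtain ⟨x, rfl⟩ := hπ.comp_left x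
  have hdvd (i : n) : f ∣ (N *ᵥ x) i := by
    rw [← Ideal.mem_span_singleton, ← hker, RingHom.mem_ker, RingHom.map_mulVec]
    exact congrFun hx i
  choose y hy using hdvd
  obtain rfl : x = M *ᵥ y := h.eq_mulVec_of_mulVec_eq_smul hf (funext hy)
  exact ⟨π ∘ y, funext fun i => (π.map_mulVec M y i).symm⟩

theorem range_mulVecLin_map_eq_ker (h : IsMatrixFactorization_s8 f M N) (hf : f ∈ P⁰)
    {π : P →+* Q} (hπ : Function.Surjective π) (hker : RingHom.ker π = Ideal.span {f}) :
    LinearMap.range (M.map π).mulVecLin = LinearMap.ker (N.map π).mulVecLin :=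
  have hπf : π f = 0 := RingHom.mem_ker.mp (hker ▸ Ideal.mem_span_singleton_self f)
  (h.range_mulVecLin_map_le_ker hπf).antisymm (h.ker_mulVecLin_map_le_range hf hπ hker)

end IsMatrixFactorization_s8

end MatrixFactorization

theorem mem_nonZeroDivisors_of_monic_finSuccEquiv {A : Type*} [CommRing A] {n : ℕ}
    {p : MvPolynomial (Fin (n + 1)) A} (hp : (finSuccEquiv A n p).Monic) :
    p ∈ (MvPolynomial (Fin (n + 1)) A)⁰ :=
  mem_nonZeroDivisors_of_injective (finSuccEquiv A n).injective hp.mem_nonZeroDivisors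

theorem matrix_map_fin_two_of {R S : Type*} (g : R → S) (a b c d : R) :
    !![a, b; c, d].map g = !![g a, g b; g c, g d] :=
  Matrix.eta_fin_two _

section KeyRing

variable {A : Type*} [CommRing A] (γ δ s t : A)

theorem finSuccEquiv_keyRel :
    finSuccEquiv A 1 (keyRel A γ δ s t) = Polynomial.X ^ 2 +
      (Polynomial.C (C γ * X 0) * Polynomial.X +
        Polynomial.C (C δ * X 0 ^ 2 - C (s ^ 2 + γ * s * t + δ * t ^ 2))) := by
  have hX : finSuccEquiv A 1 (X 1) = Polynomial.C (X 0) := finSuccEquiv_X_succ (j := 0)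
  have hC (a : A) : finSuccEquiv A 1 (C a) = Polynomial.C (C a) := by
    rw [finSuccEquiv_apply, eval₂Hom_C, RingHom.comp_apply]
  simp only [keyRel, map_sub, map_add, map_mul, map_pow, finSuccEquiv_X_zero, hX, hC]
  ring

theorem keyRel_mem_nonZeroDivisors : keyRel A γ δ s t ∈ (MvPolynomial (Fin 2) A)⁰ := by
  apply mem_nonZeroDivisors_of_monic_finSuccEquiv
  rw [finSuccEquiv_keyRel]
  exact Polynomial.monic_X_pow_add (Polynomial.degree_linear_le.trans_lt (by norm_num))

theorem kmk_surjective : Function.Surjective (kmk A γ δ s t) :=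
  Ideal.Quotient.mk_surjective

theorem ker_kmk : RingHom.ker (kmk A γ δ s t) = Ideal.span {keyRel A γ δ s t} :=
  Ideal.mk_ker

/-- The lift of `α` to a matrix over `A[X,Y]`; its adjugate lifts `β`. -/
def keyMatrix : Matrix (Fin 2) (Fin 2) (MvPolynomial (Fin 2) A) :=
  !![C δ * X 1 + C (δ * t) + C γ * X 0, X 0 + C s + C (γ * t);
     -(X 0 - C s), X 1 - C t]

theorem det_keyMatrix : (keyMatrix γ δ s t).det = keyRel A γ δ s t := by
  simp only [keyMatrix, Matrix.det_fin_two_of, keyRel, map_add, map_mul, map_pow]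
  ring

theorem adjugate_keyMatrix :
    (keyMatrix γ δ s t).adjugate =
      !![X 1 - C t, -(X 0 + C s + C (γ * t));
         X 0 - C s, C δ * X 1 + C (δ * t) + C γ * X 0] := by
  rw [keyMatrix, Matrix.adjugate_fin_two_of, neg_neg]

theorem isMatrixFactorization_keyRel :
    IsMatrixFactorization_s8 (keyRel A γ δ s t) (keyMatrix γ δ s t) (keyMatrix γ δ s t).adjugate :=
  det_keyMatrix γ δ s t ▸ isMatrixFactorization_adjugate (keyMatrix γ δ s t)

end KeyRing

/-- With `α = [[δv + δt + γu, u + s + γt], [-(u - s), v - t]]` and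
`β = [[v - t, -(u + s + γt)], [u - s, δv + δt + γu]]` acting on `R²`, the doubly
infinite periodic sequence `⋯ → R² →β R² →α R² →β R² → ⋯` is exact:
`im α = ker β` and `im β = ker α`. -/
theorem stmt8 {A : Type*} [CommRing A] (γ δ s t : A)
    (α β : Matrix (Fin 2) (Fin 2) (KeyRing A γ δ s t))
    (hα : α = !![kmk A γ δ s t (C δ * X 1 + C (δ * t) + C γ * X 0),
                 kmk A γ δ s t (X 0 + C s + C (γ * t));
                 kmk A γ δ s t (-(X 0 - C s)), kmk A γ δ s t (X 1 - C t)])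
    (hβ : β = !![kmk A γ δ s t (X 1 - C t), kmk A γ δ s t (-(X 0 + C s + C (γ * t)));
                 kmk A γ δ s t (X 0 - C s),
                 kmk A γ δ s t (C δ * X 1 + C (δ * t) + C γ * X 0)]) :
    LinearMap.range α.mulVecLin = LinearMap.ker β.mulVecLin ∧
    LinearMap.range β.mulVecLin = LinearMap.ker α.mulVecLin := by
  have hα_map : α = (keyMatrix γ δ s t).map (kmk A γ δ s t) := by
    rw [hα, keyMatrix, matrix_map_fin_two_of]
  have hβ_map : β = (keyMatrix γ δ s t).adjugate.map (kmk A γ δ s t) := by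
    rw [hβ, adjugate_keyMatrix, matrix_map_fin_two_of]
  have hfact := isMatrixFactorization_keyRel γ δ s t
  have hreg := keyRel_mem_nonZeroDivisors γ δ s t
  have hsurj := kmk_surjective γ δ s t
  have hker := ker_kmk γ δ s t
  rw [hα_map, hβ_map]
  exact ⟨hfact.range_mulVecLin_map_eq_ker hreg hsurj hker,
    hfact.symm.range_mulVecLin_map_eq_ker hreg hsurj hker⟩
end
end

section
/- Let A be a commutative ring, let γ, δ, s, t ∈ A, let q(X,Y) = X² + γXY + δY², let R = A[X,Y]/(q(X,Y) − q(s,t)), and let u, v be the images of X, Y in R. Let Q(R) be the localization of R at its multiplicative set of non-zero-divisors, with canonical map ι : R → Q(R), and let ε = ι(u + s + γt)·ι(v − t)⁻¹ ∈ Q(R) (well defined because v − t is a non-zero-divisor of R, so ι(v − t) is invertible in Q(R)). Then ε·ι(v − t) = ι(u + s + γt) and ε·ι(u − s) = −ι(δv + δt + γu); consequently ε·ι(j) lies in the image of ι for every element j of the ideal J = (u − s, v − t). -/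
/-!
As a polynomial in `X` over `A[Y]`, `q(X,Y) - q(s,t)` is monic, so `R` is a free `A[Y]`-module
and the non-zero-divisor `Y - t` of `A[Y]` stays one in `R`. In `R` the relation
`q(u,v) = q(s,t)` reads `(u + s + γt)(u - s) = -(δv + δt + γu)(v - t)`, so multiplying
`(u + s + γt)/(v - t)` by either generator of `J` leaves no denominator.
-/

noncomputable section
open MvPolynomial

/-- The canonical map `ι : R → Q(R)` into the total quotient ring (the localization of
`R` at its non-zero-divisors). -/
def keyι (A : Type*) [CommRing A] (γ δ s t : A) :
    KeyRing A γ δ s t →+* FractionRing (KeyRing A γ δ s t) :=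
  algebraMap _ _

/-- `ε = ι(u + s + γt)·ι(v - t)⁻¹ ∈ Q(R)` (`ι(v - t)` is a unit in `Q(R)` since `v - t`
is a non-zero-divisor of `R`, so `Ring.inverse` computes its genuine inverse). -/
def keyEps (A : Type*) [CommRing A] (γ δ s t : A) : FractionRing (KeyRing A γ δ s t) :=
  keyι A γ δ s t (kmk A γ δ s t (X 0 + C s + C (γ * t)))
    * Ring.inverse (keyι A γ δ s t (kmk A γ δ s t (X 1 - C t)))

section NonZeroDivisors

open scoped nonZeroDivisors

theorem adjoinRoot_of_mem_nonZeroDivisors {B : Type*} [CommRing B] {p : Polynomial B}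
    (hp : p.Monic) {b : B} (hb : b ∈ B⁰) : AdjoinRoot.of p b ∈ (AdjoinRoot p)⁰ := by
  have : Module.Free B (AdjoinRoot p) := hp.free_adjoinRoot
  have hreg : IsSMulRegular (AdjoinRoot p) b := Module.Flat.isSMulRegular_of_nonZeroDivisors hb
  refine mem_nonZeroDivisors_iff_left.mpr fun x hx => hreg.right_eq_zero_of_smul ?_
  rwa [Algebra.smul_def]

theorem mem_nonZeroDivisors_of_monomialOrder_monic {A σ : Type*} [CommSemiring A]
    {m : MonomialOrder σ} {f : MvPolynomial σ A} (hf : m.Monic f) : f ∈ (MvPolynomial σ A)⁰ :=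
  m.mem_nonZeroDivisors_of_leadingCoeff_mem_nonZeroDivisors (hf.symm ▸ one_mem _)

theorem finSuccEquiv_rename_succ {A : Type*} [CommSemiring A] {n : ℕ} (b : MvPolynomial (Fin n) A) :
    finSuccEquiv A n (rename Fin.succ b) = Polynomial.C b := by
  induction b using MvPolynomial.induction_on with
  | C a => simp [finSuccEquiv_apply]
  | add p q hp hq => simp only [map_add, hp, hq]
  | mul_X p i hp => simp only [map_mul, rename_X, finSuccEquiv_X_succ, hp]

theorem mk_rename_succ_mem_nonZeroDivisors {A : Type*} [CommRing A] {n : ℕ}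
    {F : MvPolynomial (Fin (n + 1)) A} (hF : (finSuccEquiv A n F).Monic)
    {b : MvPolynomial (Fin n) A} (hb : b ∈ (MvPolynomial (Fin n) A)⁰) :
    Ideal.Quotient.mk (Ideal.span {F}) (rename Fin.succ b) ∈
      (MvPolynomial (Fin (n + 1)) A ⧸ Ideal.span {F})⁰ := by
  let e : (MvPolynomial (Fin (n + 1)) A ⧸ Ideal.span {F}) ≃+* AdjoinRoot (finSuccEquiv A n F) :=
    Ideal.quotientEquiv _ _ (finSuccEquiv A n).toRingEquiv (by simp [Ideal.map_span])
  have he : e (Ideal.Quotient.mk _ (rename Fin.succ b)) = AdjoinRoot.of (finSuccEquiv A n F) b :=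
    congrArg (AdjoinRoot.mk _) (finSuccEquiv_rename_succ b)
  exact mem_nonZeroDivisors_of_injective e.injective
    (he ▸ adjoinRoot_of_mem_nonZeroDivisors hF hb)

end NonZeroDivisors

section Fractions

theorem map_mul_inverse_mul_map_of_mul_eq {M N F : Type*} [Mul M] [CommMonoidWithZero N]
    [FunLike F M N] [MulHomClass F M N] (f : F) {a b c x : M} (hc : IsUnit (f c))
    (h : a * x = b * c) : f a * Ring.inverse (f c) * f x = f b := by
  rw [mul_right_comm, ← map_mul, h, map_mul, Ring.mul_inverse_cancel_right _ _ hc]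

theorem mul_map_mem_rangeS_of_mem_span {R K : Type*} [CommSemiring R] [CommSemiring K]
    (f : R →+* K) {e : K} {s : Set R} (hs : ∀ x ∈ s, e * f x ∈ f.rangeS) {x : R}
    (hx : x ∈ Ideal.span s) : e * f x ∈ f.rangeS := by
  induction hx using Submodule.span_induction with
  | mem x hx => exact hs x hx
  | zero => simp
  | add x y _ _ hx hy => simpa only [map_add, mul_add] using add_mem hx hy
  | smul r x _ hx =>
    simpa only [smul_eq_mul, map_mul, mul_left_comm] using mul_mem (f.mem_rangeS_self r) hx

end Fractions

section KeyRing

variable {A : Type*} [CommRing A] (γ δ s t : A)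

theorem monic_finSuccEquiv_keyRel : (finSuccEquiv A 1 (keyRel A γ δ s t)).Monic := by
  let φ : MvPolynomial (Fin 2) A →ₐ[A] Polynomial (MvPolynomial (Fin 1) A) := finSuccEquiv A 1
  have hX : φ (X 0) = Polynomial.X := finSuccEquiv_X_zero
  have hY : φ (X 1) = Polynomial.C (X 0) := finSuccEquiv_X_succ (j := 0)
  have hC (a : A) : φ (C a) = Polynomial.C (C a) := φ.commutes a
  have hquad : φ (keyRel A γ δ s t) =
      Polynomial.X ^ 2 + (Polynomial.C (C γ * X 0) * Polynomial.X +
        Polynomial.C (C δ * X 0 ^ 2 - C (s ^ 2 + γ * s * t + δ * t ^ 2))) := by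
    simp only [keyRel, map_sub φ, map_add φ, map_mul φ, map_pow φ, hX, hY, hC, Polynomial.C_mul,
      Polynomial.C_sub, Polynomial.C_pow]
    ring
  change (φ (keyRel A γ δ s t)).Monic
  rw [hquad]
  exact Polynomial.monic_X_pow_add (Polynomial.degree_linear_le.trans_lt (by norm_num))

theorem kmk_X_one_sub_C_mem_nonZeroDivisors :
    kmk A γ δ s t (X 1 - C t) ∈ nonZeroDivisors (KeyRing A γ δ s t) := by
  have hrename : rename Fin.succ (X 0 - C t : MvPolynomial (Fin 1) A) = X 1 - C t := by simp
  rw [← hrename]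
  exact mk_rename_succ_mem_nonZeroDivisors (monic_finSuccEquiv_keyRel γ δ s t)
    (mem_nonZeroDivisors_of_monomialOrder_monic (MonomialOrder.lex.monic_X_sub_C 0 t))

theorem isUnit_keyι_kmk_X_one_sub_C : IsUnit (keyι A γ δ s t (kmk A γ δ s t (X 1 - C t))) :=
  IsLocalization.map_units (FractionRing (KeyRing A γ δ s t))
    ⟨_, kmk_X_one_sub_C_mem_nonZeroDivisors γ δ s t⟩

theorem kmk_mul_kmk_X_zero_sub_C :
    kmk A γ δ s t (X 0 + C s + C (γ * t)) * kmk A γ δ s t (X 0 - C s) =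
      -kmk A γ δ s t (C δ * X 1 + C (δ * t) + C γ * X 0) * kmk A γ δ s t (X 1 - C t) := by
  rw [← map_neg, ← map_mul, ← map_mul]
  refine Ideal.Quotient.eq.mpr (Ideal.mem_span_singleton.mpr ⟨1, ?_⟩)
  simp only [keyRel, map_add, map_mul, map_pow]
  ring

end KeyRing

set_option synthInstance.maxHeartbeats 1000000 in
/-- `ε·ι(v - t) = ι(u + s + γt)`, `ε·ι(u - s) = -ι(δv + δt + γu)`, and consequently
`ε·ι(j)` lies in the image of `ι` for every `j` in the ideal `J = (u - s, v - t)`. -/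
theorem stmt11 {A : Type*} [CommRing A] (γ δ s t : A) :
    keyEps A γ δ s t * keyι A γ δ s t (kmk A γ δ s t (X 1 - C t))
        = keyι A γ δ s t (kmk A γ δ s t (X 0 + C s + C (γ * t))) ∧
    keyEps A γ δ s t * keyι A γ δ s t (kmk A γ δ s t (X 0 - C s))
        = -keyι A γ δ s t (kmk A γ δ s t (C δ * X 1 + C (δ * t) + C γ * X 0)) ∧
    ∀ j ∈ Ideal.span {kmk A γ δ s t (X 0 - C s), kmk A γ δ s t (X 1 - C t)},
      keyEps A γ δ s t * keyι A γ δ s t j ∈ Set.range (keyι A γ δ s t) := by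
  have hunit := isUnit_keyι_kmk_X_one_sub_C γ δ s t
  have hv : keyEps A γ δ s t * keyι A γ δ s t (kmk A γ δ s t (X 1 - C t))
      = keyι A γ δ s t (kmk A γ δ s t (X 0 + C s + C (γ * t))) :=
    map_mul_inverse_mul_map_of_mul_eq _ hunit rfl
  have hu : keyEps A γ δ s t * keyι A γ δ s t (kmk A γ δ s t (X 0 - C s))
      = -keyι A γ δ s t (kmk A γ δ s t (C δ * X 1 + C (δ * t) + C γ * X 0)) :=
    (map_mul_inverse_mul_map_of_mul_eq _ hunit (kmk_mul_kmk_X_zero_sub_C γ δ s t)).trans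
      (map_neg _ _)
  refine ⟨hv, hu, fun j hj => mul_map_mem_rangeS_of_mem_span _ ?_ hj⟩
  rintro x (rfl | rfl)
  · exact ⟨_, (map_neg _ _).trans hu.symm⟩
  · exact ⟨_, hv.symm⟩
end
end

section
/- Let A be a commutative ring, let γ, δ, s, t ∈ A with γ² − 4δ a unit in A, let q(X,Y) = X² + γXY + δY², let R = A[X,Y]/(q(X,Y) − q(s,t)), and let u, v be the images of X, Y in R. Let Q(R) be the total quotient ring of R with canonical map ι : R → Q(R), and let ε = ι(u + s + γt)·ι(v − t)⁻¹ ∈ Q(R). Then for every r ∈ R, the product ε·ι(r) lies in the image of ι if and only if r belongs to the ideal J = (u − s, v − t). In particular, the map A → (R + R·ε)/ι(R) sending a ∈ A to the class of ι(a)·ε is bijective, i.e. the quotient J∨/R is a free A-module of rank one generated by the class of ε. -/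
set_option synthInstance.maxHeartbeats 1000000
set_option maxHeartbeats 2000000

noncomputable section
open MvPolynomial

/-- The `R`-submodule `R + R·ε` of `Q(R)`. -/
def keyP (A : Type*) [CommRing A] (γ δ s t : A) :
    Submodule (KeyRing A γ δ s t) (FractionRing (KeyRing A γ δ s t)) :=
  Submodule.span _ {1, keyEps A γ δ s t}

/-!
On the line `Y = t` the relation factors: `q(X, t) - q(s, t) = (X - s)(X + s + γt)`. Both factors
are monic, so `Y - t, q - q(s, t)` is a regular sequence in `A[X, Y]`, which forces `v - t` to be a
non-zero-divisor of `R`. In `R / (v - t) = A[X] / ((X - s)(X + s + γt))` the annihilator of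
`X + s + γt` is generated by `X - s`, so `ε r ∈ R`, that is `v - t ∣ (u + s + γt) r`, holds exactly
for `r ∈ J`. Since `J` is also the kernel of the evaluation `R → A` at the point `(s, t)`, every `r`
is congruent to the constant `r(s, t)` modulo `J`, so that `r ε ≡ r(s, t) ε` modulo `R`, and a
constant lies in `J` only if it is `0`.
-/

open scoped nonZeroDivisors

section QuotientByRelation

variable {B C : Type*} [CommRing B] [CommRing C] {φ : B →+* C} {d F m n : B}

lemma map_eq_zero_iff_dvd_of_ker_eq_span (hφ : RingHom.ker φ = Ideal.span {d}) (x : B) :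
    φ x = 0 ↔ d ∣ x := by
  rw [← RingHom.mem_ker, hφ, Ideal.mem_span_singleton]

lemma mk_mem_nonZeroDivisors_of_ker_eq_span (hφ : RingHom.ker φ = Ideal.span {d})
    (hd : d ∈ B⁰) (hF : φ F ∈ C⁰) :
    Ideal.Quotient.mk (Ideal.span {F}) d ∈ (B ⧸ Ideal.span {F})⁰ := by
  rw [mem_nonZeroDivisors_iff_left]
  intro r hr
  obtain ⟨x, rfl⟩ := Ideal.Quotient.mk_surjective r
  rw [← map_mul, Ideal.Quotient.eq_zero_iff_dvd] at hr
  obtain ⟨g, hg⟩ := hr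
  have hφg : φ F * φ g = 0 := by
    rw [← map_mul, ← hg, map_eq_zero_iff_dvd_of_ker_eq_span hφ]
    exact dvd_mul_right d x
  obtain ⟨k, rfl⟩ := (map_eq_zero_iff_dvd_of_ker_eq_span hφ g).1
    ((mul_left_mem_nonZeroDivisors_eq_zero_iff hF).1 hφg)
  rw [Ideal.Quotient.eq_zero_iff_dvd]
  refine ⟨k, (mul_cancel_left_mem_nonZeroDivisors hd).1 ?_⟩
  rw [hg, mul_left_comm]

lemma mk_dvd_mk_mul_iff_mem_span_pair (hφ : RingHom.ker φ = Ideal.span {d}) (hn : φ n ∈ C⁰)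
    (hF : φ F = φ m * φ n) (r : B ⧸ Ideal.span {F}) :
    Ideal.Quotient.mk (Ideal.span {F}) d ∣ Ideal.Quotient.mk (Ideal.span {F}) n * r ↔
      r ∈ Ideal.span {Ideal.Quotient.mk (Ideal.span {F}) m,
        Ideal.Quotient.mk (Ideal.span {F}) d} := by
  set π := Ideal.Quotient.mk (Ideal.span {F})
  have hφd : φ d = 0 := (map_eq_zero_iff_dvd_of_ker_eq_span hφ d).2 dvd_rfl
  have hπF : π F = 0 := Ideal.Quotient.mk_singleton_self F
  constructor
  · rintro ⟨r', hr'⟩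
    obtain ⟨x, rfl⟩ := Ideal.Quotient.mk_surjective r
    obtain ⟨y, rfl⟩ := Ideal.Quotient.mk_surjective r'
    rw [← map_mul, ← map_mul, Ideal.Quotient.mk_eq_mk_iff_sub_mem,
      Ideal.mem_span_singleton] at hr'
    obtain ⟨g, hg⟩ := hr'
    have hx : φ x = φ (m * g) := by
      have h := congrArg φ hg
      simp only [map_sub, map_mul, hφd, hF] at h
      rw [map_mul, ← mul_cancel_left_mem_nonZeroDivisors hn]
      linear_combination h
    obtain ⟨k, hk⟩ := (map_eq_zero_iff_dvd_of_ker_eq_span hφ (x - m * g)).1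
      (by rw [map_sub, hx, sub_self])
    refine Ideal.mem_span_pair.2 ⟨π g, π k, ?_⟩
    rw [← map_mul, ← map_mul, ← map_add]
    congr 1
    linear_combination -hk
  · obtain ⟨e, he⟩ := (map_eq_zero_iff_dvd_of_ker_eq_span hφ (n * m - F)).1
      (by rw [map_sub, map_mul, hF]; ring)
    have hnm : π n * π m = π d * π e := by
      rw [← map_mul, ← map_mul, ← he, map_sub, hπF, sub_zero]
    rw [Ideal.mem_span_pair]
    rintro ⟨a, b, rfl⟩
    exact ⟨a * π e + b * π n, by linear_combination a * hnm⟩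

end QuotientByRelation

section Fractions

lemma map_mul_inverse_mul_mem_range_iff_dvd {R K : Type*} [CommRing R] [CommRing K]
    {f : R →+* K} (hf : Function.Injective f) {d : R} (hd : IsUnit (f d)) (n r : R) :
    f n * Ring.inverse (f d) * f r ∈ Set.range f ↔ d ∣ n * r := by
  refine exists_congr fun r' => ?_
  rw [← hf.eq_iff, ← hd.mul_right_inj, eq_comm, map_mul, map_mul,
    mul_right_comm, mul_comm (f n * f r), Ring.mul_inverse_cancel_left _ _ hd]

variable {A R K : Type*} [CommRing A] [CommRing R] [CommRing K] [Algebra A R] [Algebra R K]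
  {π : R →ₐ[A] A} {ε : K}

lemma eq_of_algebraMap_sub_mul_mem_range
    (hε : ∀ r, ε * algebraMap R K r ∈ Set.range (algebraMap R K) ↔ r ∈ RingHom.ker π) {a b : A}
    (h : (algebraMap R K (algebraMap A R a) - algebraMap R K (algebraMap A R b)) * ε ∈
      Set.range (algebraMap R K)) : a = b := by
  rw [← map_sub, ← map_sub, mul_comm, hε, RingHom.mem_ker, AlgHom.commutes] at h
  exact sub_eq_zero.1 h

lemma exists_eq_algebraMap_add_algebraMap_mul
    (hε : ∀ r, ε * algebraMap R K r ∈ Set.range (algebraMap R K) ↔ r ∈ RingHom.ker π) {w : K}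
    (hw : w ∈ Submodule.span R {1, ε}) :
    ∃ (a : A) (r : R), w = algebraMap R K r + algebraMap R K (algebraMap A R a) * ε := by
  obtain ⟨p, r, rfl⟩ := Submodule.mem_span_pair.1 hw
  have hr : r - algebraMap A R (π r) ∈ RingHom.ker π := by
    rw [RingHom.mem_ker, map_sub, AlgHom.commutes]
    exact sub_self _
  obtain ⟨r', hr'⟩ := (hε _).2 hr
  refine ⟨π r, p + r', ?_⟩
  rw [map_add, hr', map_sub, Algebra.smul_def, Algebra.smul_def]
  ring

end Fractions

section MvPolynomial

variable {σ A : Type*} [CommRing A]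

lemma aeval_sub_aeval_mem {S : Type*} [CommRing S] [Algebra A S] {I : Ideal S} {f g : σ → S}
    (h : ∀ i, f i - g i ∈ I) (p : MvPolynomial σ A) : aeval f p - aeval g p ∈ I := by
  have hfg : (Ideal.Quotient.mkₐ A I).comp (aeval f) = (Ideal.Quotient.mkₐ A I).comp (aeval g) :=
    algHom_ext fun i => by
      simpa only [AlgHom.comp_apply, aeval_X, Ideal.Quotient.mkₐ_eq_mk] using
        Ideal.Quotient.eq.2 (h i)
  exact Ideal.Quotient.eq.1 (DFunLike.congr_fun hfg p)

lemma sub_C_aeval_mem {I : Ideal (MvPolynomial σ A)} {a : σ → A} (h : ∀ i, X i - C (a i) ∈ I)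
    (p : MvPolynomial σ A) : p - C (aeval a p) ∈ I := by
  have hp := aeval_sub_aeval_mem (g := algebraMap A (MvPolynomial σ A) ∘ a) h p
  rwa [aeval_X_left_apply, aeval_algebraMap_apply] at hp

lemma ker_aeval_update_X [DecidableEq σ] (i : σ) (a : A) :
    RingHom.ker (aeval (R := A) (Function.update X i (C a))) =
      Ideal.span {(X i - C a : MvPolynomial σ A)} := by
  refine le_antisymm (fun p hp => ?_) ?_
  · have hX (j : σ) : X j - Function.update X i (C a) j ∈
        Ideal.span {(X i - C a : MvPolynomial σ A)} := by
      rcases eq_or_ne j i with rfl | hj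
      · simp only [Function.update_self, Ideal.mem_span_singleton_self]
      · simp only [Function.update_of_ne hj, sub_self, zero_mem]
    simpa only [aeval_X_left_apply, RingHom.mem_ker.1 hp, sub_zero] using
      aeval_sub_aeval_mem hX p
  · rw [Ideal.span_singleton_le_iff_mem, RingHom.mem_ker, map_sub, aeval_X, algHom_C,
      Function.update_self, algebraMap_eq, sub_self]

lemma X_add_C_mem_nonZeroDivisors (i : σ) (a : A) :
    (X i + C a : MvPolynomial σ A) ∈ (MvPolynomial σ A)⁰ := by
  obtain ⟨_, _⟩ := exists_wellFoundedGT σ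
  refine MonomialOrder.mem_nonZeroDivisors_of_leadingCoeff_mem_nonZeroDivisors
    (m := MonomialOrder.lex) ?_
  rw [(MonomialOrder.monic_X_add_C _ i a).leadingCoeff_eq_one]
  exact one_mem _

lemma X_sub_C_mem_nonZeroDivisors (i : σ) (a : A) :
    (X i - C a : MvPolynomial σ A) ∈ (MvPolynomial σ A)⁰ := by
  simpa only [map_neg, ← sub_eq_add_neg] using X_add_C_mem_nonZeroDivisors i (-a)

end MvPolynomial

namespace KeyRing

variable {A : Type*} [CommRing A] (γ δ s t : A)

/-- The ideal `J = (u - s, v - t)` of the point `(s, t)` of the conic `Spec R`. -/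
def pointIdeal : Ideal (KeyRing A γ δ s t) :=
  Ideal.span {kmk A γ δ s t (X 0 - C s), kmk A γ δ s t (X 1 - C t)}

/-- Evaluation `R → A` at the point `(s, t)` of the conic. -/
def evalPoint : KeyRing A γ δ s t →ₐ[A] A :=
  Ideal.Quotient.liftₐ _ (aeval ![s, t]) fun f hf => by
    obtain ⟨g, rfl⟩ := Ideal.mem_span_singleton.1 hf
    simp [keyRel]

lemma evalPoint_kmk (f : MvPolynomial (Fin 2) A) :
    evalPoint γ δ s t (kmk A γ δ s t f) = aeval ![s, t] f := rfl

lemma ker_evalPoint : RingHom.ker (evalPoint γ δ s t) = pointIdeal γ δ s t := by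
  refine le_antisymm (fun r hr => ?_) ?_
  · obtain ⟨f, rfl⟩ : ∃ f, kmk A γ δ s t f = r := Ideal.Quotient.mk_surjective r
    rw [RingHom.mem_ker, evalPoint_kmk] at hr
    have hX : ∀ i, X i - C (![s, t] i) ∈ (pointIdeal γ δ s t).comap (kmk A γ δ s t) :=
      Fin.forall_fin_two.2 ⟨Ideal.subset_span (Or.inl rfl), Ideal.subset_span (Or.inr rfl)⟩
    simpa only [hr, map_zero, sub_zero, Ideal.mem_comap] using sub_C_aeval_mem hX f
  · refine Ideal.span_le.2 (Set.pair_subset ?_ ?_) <;> simp [RingHom.mem_ker, evalPoint_kmk]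

/-- Restriction of a polynomial in `X, Y` to the line `Y = t`, again as a polynomial in `X, Y`. -/
def restrictLine : MvPolynomial (Fin 2) A →ₐ[A] MvPolynomial (Fin 2) A :=
  aeval (Function.update X 1 (C t))

lemma ker_restrictLine :
    RingHom.ker (restrictLine t : MvPolynomial (Fin 2) A →+* MvPolynomial (Fin 2) A) =
      Ideal.span {X 1 - C t} :=
  ker_aeval_update_X 1 t

lemma restrictLine_C (a : A) : restrictLine t (C a) = C a := algHom_C _ a

lemma restrictLine_X_zero : restrictLine t (X 0) = (X 0 : MvPolynomial (Fin 2) A) := by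
  rw [restrictLine, aeval_X, Function.update_of_ne zero_ne_one]

lemma restrictLine_X_one : restrictLine t (X 1) = (C t : MvPolynomial (Fin 2) A) := by
  rw [restrictLine, aeval_X, Function.update_self]

lemma restrictLine_X_zero_sub_C : restrictLine t (X 0 - C s) = X 0 - C s := by
  rw [map_sub, restrictLine_X_zero, restrictLine_C]

lemma restrictLine_X_zero_add_C :
    restrictLine t (X 0 + C s + C (γ * t)) = X 0 + C (s + γ * t) := by
  rw [map_add, map_add, restrictLine_X_zero, restrictLine_C, restrictLine_C, C_add, add_assoc]

lemma restrictLine_keyRel :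
    restrictLine t (keyRel A γ δ s t) = (X 0 - C s) * (X 0 + C (s + γ * t)) := by
  simp only [keyRel, map_sub, map_add, map_mul, map_pow, restrictLine_X_zero, restrictLine_X_one,
    restrictLine_C]
  ring

lemma kmk_X_one_sub_C_mem_nonZeroDivisors :
    kmk A γ δ s t (X 1 - C t) ∈ (KeyRing A γ δ s t)⁰ := by
  refine mk_mem_nonZeroDivisors_of_ker_eq_span (ker_restrictLine t)
    (X_sub_C_mem_nonZeroDivisors 1 t) ?_
  rw [RingHom.coe_coe, restrictLine_keyRel]
  exact mul_mem (X_sub_C_mem_nonZeroDivisors 0 s) (X_add_C_mem_nonZeroDivisors 0 (s + γ * t))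

lemma kmk_dvd_kmk_mul_iff_mem_pointIdeal (r : KeyRing A γ δ s t) :
    kmk A γ δ s t (X 1 - C t) ∣ kmk A γ δ s t (X 0 + C s + C (γ * t)) * r ↔
      r ∈ pointIdeal γ δ s t := by
  refine mk_dvd_mk_mul_iff_mem_span_pair (ker_restrictLine t) ?_ ?_ r
  · rw [RingHom.coe_coe, restrictLine_X_zero_add_C]
    exact X_add_C_mem_nonZeroDivisors 0 (s + γ * t)
  · rw [RingHom.coe_coe, restrictLine_keyRel, restrictLine_X_zero_sub_C, restrictLine_X_zero_add_C]

lemma keyEps_mul_mem_range_iff_mem_pointIdeal (r : KeyRing A γ δ s t) :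
    keyEps A γ δ s t * keyι A γ δ s t r ∈ Set.range (keyι A γ δ s t) ↔
      r ∈ pointIdeal γ δ s t := by
  rw [← kmk_dvd_kmk_mul_iff_mem_pointIdeal]
  exact map_mul_inverse_mul_mem_range_iff_dvd (IsFractionRing.injective _ _)
    (IsLocalization.map_units _ ⟨_, kmk_X_one_sub_C_mem_nonZeroDivisors γ δ s t⟩) _ r

end KeyRing

theorem stmt12_general {A : Type*} [CommRing A] (γ δ s t : A) :
    (∀ r : KeyRing A γ δ s t,
      keyEps A γ δ s t * keyι A γ δ s t r ∈ Set.range (keyι A γ δ s t) ↔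
        r ∈ Ideal.span {kmk A γ δ s t (X 0 - C s), kmk A γ δ s t (X 1 - C t)}) ∧
    (∀ a b : A, (∃ r : KeyRing A γ δ s t,
        keyι A γ δ s t r = (keyι A γ δ s t (algebraMap A (KeyRing A γ δ s t) a)
          - keyι A γ δ s t (algebraMap A (KeyRing A γ δ s t) b)) * keyEps A γ δ s t)
      → a = b) ∧
    (∀ w ∈ keyP A γ δ s t, ∃ a : A, ∃ r : KeyRing A γ δ s t,
        w = keyι A γ δ s t r
          + keyι A γ δ s t (algebraMap A (KeyRing A γ δ s t) a) * keyEps A γ δ s t) := by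
  have hker (r : KeyRing A γ δ s t) :
      keyEps A γ δ s t * keyι A γ δ s t r ∈ Set.range (keyι A γ δ s t) ↔
        r ∈ RingHom.ker (KeyRing.evalPoint γ δ s t) := by
    rw [KeyRing.ker_evalPoint]
    exact KeyRing.keyEps_mul_mem_range_iff_mem_pointIdeal γ δ s t r
  exact ⟨KeyRing.keyEps_mul_mem_range_iff_mem_pointIdeal γ δ s t,
    fun _ _ h => eq_of_algebraMap_sub_mul_mem_range hker h,
    fun _ hw => exists_eq_algebraMap_add_algebraMap_mul hker hw⟩

/-- If `γ² - 4δ` is a unit then `ε·ι(r) ∈ ι(R)` exactly when `r ∈ J = (u - s, v - t)`;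
moreover the map `A → (R + R·ε)/ι(R)`, `a ↦ [ι(a)·ε]`, is bijective (stated unfolded:
it is injective, and every element of `R + R·ε` is congruent mod `ι(R)` to `ι(a)·ε`
for some `a ∈ A`), i.e. `J∨/R` is a free `A`-module of rank one generated by the
class of `ε`. -/
theorem stmt12 {A : Type*} [CommRing A] (γ δ s t : A)
    (hdisc : IsUnit (γ ^ 2 - 4 * δ)) :
    (∀ r : KeyRing A γ δ s t,
      keyEps A γ δ s t * keyι A γ δ s t r ∈ Set.range (keyι A γ δ s t) ↔
        r ∈ Ideal.span {kmk A γ δ s t (X 0 - C s), kmk A γ δ s t (X 1 - C t)}) ∧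
    (∀ a b : A, (∃ r : KeyRing A γ δ s t,
        keyι A γ δ s t r = (keyι A γ δ s t (algebraMap A (KeyRing A γ δ s t) a)
          - keyι A γ δ s t (algebraMap A (KeyRing A γ δ s t) b)) * keyEps A γ δ s t)
      → a = b) ∧
    (∀ w ∈ keyP A γ δ s t, ∃ a : A, ∃ r : KeyRing A γ δ s t,
        w = keyι A γ δ s t r
          + keyι A γ δ s t (algebraMap A (KeyRing A γ δ s t) a) * keyEps A γ δ s t) :=
  stmt12_general γ δ s t
end
end

section
/- Let A be a commutative ring and let γ, δ, s, t ∈ A. Let R₁ = A[u, x]/(u(δx² − γx + 1) + s(δx² − 1) + tδ(γx² − 2x)), the quotient of the polynomial ring in two variables u, x over A by the principal ideal generated by the indicated element. Then the localization of R₁ away from the image of δx² − γx + 1 is isomorphic, as an A[x]-algebra, to the localization of the polynomial ring A[x] away from δx² − γx + 1; that is, R₁[(δx² − γx + 1)⁻¹] ≅ A[x][(δx² − γx + 1)⁻¹]. -/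
set_option synthInstance.maxHeartbeats 1000000
set_option maxHeartbeats 2000000

noncomputable section
open MvPolynomial

/-- The relation `u(δx² - γx + 1) + s(δx² - 1) + tδ(γx² - 2x)` defining the second
affine chart of the stabilized curve, where `u = X 0` and `x = X 1`. -/
def chartRel₁ (A : Type*) [CommRing A] (γ δ s t : A) : MvPolynomial (Fin 2) A :=
  X 0 * (C δ * X 1 ^ 2 - C γ * X 1 + 1) + C s * (C δ * X 1 ^ 2 - 1)
    + C (t * δ) * (C γ * X 1 ^ 2 - 2 * X 1)

/-- `R₁ = A[u, x]/(u(δx² - γx + 1) + s(δx² - 1) + tδ(γx² - 2x))`. -/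
abbrev ChartRing₁ (A : Type*) [CommRing A] (γ δ s t : A) :=
  MvPolynomial (Fin 2) A ⧸ Ideal.span {chartRel₁ A γ δ s t}

/-- The structure map `A[x] → R₁`, sending `x` to the image of `x`. -/
def chartMap₁ (A : Type*) [CommRing A] (γ δ s t : A) :
    Polynomial A →+* ChartRing₁ A γ δ s t :=
  (Ideal.Quotient.mk (Ideal.span {chartRel₁ A γ δ s t})).comp
    (Polynomial.aeval (X 1 : MvPolynomial (Fin 2) A)).toRingHom

/-!
Once `g` is invertible the equation `g u + h = 0` has the unique solution `u = -h / g`. Hence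
`P[U]/(g U + h)` maps to `P[g⁻¹]` over `P`, and since every element of it becomes an element of `P`
after multiplication by a power of `g`, this map is a localization away from `g`. The theorem is the
case `P = A[x]`, because the defining relation of the chart is linear in `u` with leading
coefficient `g = δx² - γx + 1`.
-/

section Localization

variable {P R S : Type*} [CommRing P] [CommRing R] [CommRing S] [Algebra P R] [Algebra P S]

theorem exists_smul_mem_range_of_adjoin_eq_top (M : Submonoid P) {s : Set R}
    (hs : Algebra.adjoin P s = ⊤)
    (h : ∀ u ∈ s, ∃ m ∈ M, m • u ∈ (algebraMap P R).range) (r : R) :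
    ∃ m ∈ M, m • r ∈ (algebraMap P R).range := by
  have hr : r ∈ Algebra.adjoin P s := hs ▸ Algebra.mem_top
  induction hr using Algebra.adjoin_induction with
  | mem u hu => exact h u hu
  | algebraMap p => exact ⟨1, M.one_mem, p, (one_smul P _).symm⟩
  | add x y _ _ hx hy =>
    obtain ⟨m, hm, hmx⟩ := hx
    obtain ⟨n, hn, hny⟩ := hy
    refine ⟨m * n, M.mul_mem hm hn, ?_⟩
    have hsplit : (m * n) • (x + y) =
        algebraMap P R n * (m • x) + algebraMap P R m * (n • y) := by
      simp only [Algebra.smul_def, map_mul]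
      ring
    rw [hsplit]
    exact add_mem (mul_mem ⟨n, rfl⟩ hmx) (mul_mem ⟨m, rfl⟩ hny)
  | mul x y _ _ hx hy =>
    obtain ⟨m, hm, hmx⟩ := hx
    obtain ⟨n, hn, hny⟩ := hy
    refine ⟨m * n, M.mul_mem hm hn, ?_⟩
    rw [← smul_mul_smul_comm]
    exact mul_mem hmx hny

theorem isLocalization_algebraMapSubmonoid_of_exists_smul_mem_range [Algebra R S]
    [IsScalarTower P R S] (M : Submonoid P) [IsLocalization M S]
    (h : ∀ r : R, ∃ m ∈ M, m • r ∈ (algebraMap P R).range) :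
    IsLocalization (Algebra.algebraMapSubmonoid R M) S where
  map_units := by
    rintro ⟨_, m, hm, rfl⟩
    rw [← IsScalarTower.algebraMap_apply]
    exact IsLocalization.map_units S ⟨m, hm⟩
  surj z := by
    obtain ⟨⟨p, m⟩, hz⟩ := IsLocalization.surj M z
    refine ⟨⟨algebraMap P R p, algebraMap P R m, Algebra.mem_algebraMapSubmonoid_of_mem m⟩, ?_⟩
    simpa only [← IsScalarTower.algebraMap_apply] using hz
  exists_of_eq {x y} hxy := by
    obtain ⟨m, hm, p, hp⟩ := h (x - y)
    have hpS : algebraMap P S p = 0 := by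
      rw [IsScalarTower.algebraMap_apply P R S, hp, Algebra.smul_def, map_mul, map_sub, hxy,
        sub_self, mul_zero]
    obtain ⟨n, hn⟩ := (IsLocalization.map_eq_zero_iff M S p).mp hpS
    refine ⟨⟨_, Algebra.mem_algebraMapSubmonoid_of_mem (n * ⟨m, hm⟩)⟩, sub_eq_zero.mp ?_⟩
    calc algebraMap P R (n * m) * x - algebraMap P R (n * m) * y
        = algebraMap P R n * (m • (x - y)) := by
          rw [Algebra.smul_def, map_mul]
          ring
      _ = algebraMap P R (n * p) := by rw [← hp, map_mul]
      _ = 0 := by rw [hn, map_zero]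

end Localization

section LinearAdjoinRoot

variable {P : Type*} [CommRing P] (g h : P)

theorem nonempty_algHom_adjoinRoot_linear {S : Type*} [CommRing S] [Algebra P S]
    (hg : IsUnit (algebraMap P S g)) :
    Nonempty (AdjoinRoot (Polynomial.C g * Polynomial.X + Polynomial.C h) →ₐ[P] S) := by
  obtain ⟨v, hv⟩ := hg.exists_right_inv
  refine ⟨AdjoinRoot.liftAlgHom _ (Algebra.ofId P S) (-(v * algebraMap P S h)) ?_⟩
  simp [← mul_assoc, hv]

theorem smul_root_linear_mem_range :
    g • AdjoinRoot.root (Polynomial.C g * Polynomial.X + Polynomial.C h) ∈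
      (algebraMap P (AdjoinRoot (Polynomial.C g * Polynomial.X + Polynomial.C h))).range := by
  refine ⟨-h, ?_⟩
  have hroot := AdjoinRoot.eval₂_root (Polynomial.C g * Polynomial.X + Polynomial.C h)
  simp only [Polynomial.eval₂_add, Polynomial.eval₂_mul, Polynomial.eval₂_C,
    Polynomial.eval₂_X] at hroot
  rw [Algebra.smul_def, map_neg, AdjoinRoot.algebraMap_eq]
  exact (eq_neg_of_add_eq_zero_left hroot).symm

theorem nonempty_localizationAway_adjoinRoot_linear_algEquiv :
    Nonempty (Localization.Away
        (AdjoinRoot.of (Polynomial.C g * Polynomial.X + Polynomial.C h) g) ≃ₐ[P]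
      Localization.Away g) := by
  let R := AdjoinRoot (Polynomial.C g * Polynomial.X + Polynomial.C h)
  obtain ⟨ψ⟩ : Nonempty (R →ₐ[P] Localization.Away g) :=
    nonempty_algHom_adjoinRoot_linear g h (IsLocalization.Away.algebraMap_isUnit g)
  let : Algebra R (Localization.Away g) := ψ.toAlgebra
  have : IsScalarTower P R (Localization.Away g) :=
    .of_algebraMap_eq fun p => (ψ.commutes p).symm
  have hR (r : R) : ∃ m ∈ Submonoid.powers g, m • r ∈ (algebraMap P R).range := by
    refine exists_smul_mem_range_of_adjoin_eq_top _ AdjoinRoot.adjoinRoot_eq_top ?_ r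
    rintro _ rfl
    exact ⟨g, Submonoid.mem_powers g, smul_root_linear_mem_range g h⟩
  have : IsLocalization.Away (algebraMap P R g) (Localization.Away g) := by
    rw [IsLocalization.Away, ← Algebra.algebraMapSubmonoid_powers]
    exact isLocalization_algebraMapSubmonoid_of_exists_smul_mem_range _ hR
  exact ⟨(Localization.algEquiv (Submonoid.powers (algebraMap P R g))
    (Localization.Away g)).restrictScalars P⟩

end LinearAdjoinRoot

section Chart

open Polynomial.Bivariate

variable {A : Type*} [CommRing A]

theorem equivMvPolynomial_swap_C (p : Polynomial A) :
    equivMvPolynomial A (swap (Polynomial.C p)) = Polynomial.aeval (X 1) p := by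
  induction p using Polynomial.induction_on' with
  | add p q hp hq => simp only [map_add, hp, hq]
  | monomial n a =>
    simp only [← Polynomial.C_mul_X_pow_eq_monomial, map_mul, map_pow, swap_C_C, swap_X,
      equivMvPolynomial_C_C, equivMvPolynomial_X, Polynomial.aeval_C, Polynomial.aeval_X,
      MvPolynomial.algebraMap_eq]

/-- The presentation of `A[u, x]/(u g(x) + h(x))` as `A[x][U]/(g U + h)`, where `u = X 0` and
`x = X 1`; it exhibits the former ring as obtained from `A[x]` by adjoining the root of a linear
polynomial. -/
def adjoinRootLinearEquiv (g h : Polynomial A) :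
    AdjoinRoot (Polynomial.C g * Polynomial.X + Polynomial.C h) ≃+*
      MvPolynomial (Fin 2) A ⧸
        Ideal.span {(X 0 * Polynomial.aeval (X 1) g + Polynomial.aeval (X 1) h :
          MvPolynomial (Fin 2) A)} :=
  Ideal.quotientEquiv _ _ (swap.trans (equivMvPolynomial A)).toRingEquiv <| by
    have hrel : equivMvPolynomial A (swap (Polynomial.C g * Polynomial.X + Polynomial.C h)) =
        X 0 * Polynomial.aeval (X 1) g + Polynomial.aeval (X 1) h := by
      rw [map_add, map_add, map_mul, map_mul, equivMvPolynomial_swap_C, equivMvPolynomial_swap_C,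
        swap_Y, equivMvPolynomial_C_X, mul_comm]
    rw [Ideal.map_span, Set.image_singleton, ← hrel]
    rfl

theorem adjoinRootLinearEquiv_of (g h p : Polynomial A) :
    adjoinRootLinearEquiv g h (AdjoinRoot.of _ p) =
      Ideal.Quotient.mk _ (Polynomial.aeval (X 1) p) :=
  congrArg (Ideal.Quotient.mk _) (equivMvPolynomial_swap_C p)

theorem chartRel₁_eq (γ δ s t : A) :
    chartRel₁ A γ δ s t =
      X 0 * Polynomial.aeval (X 1)
          (Polynomial.C δ * Polynomial.X ^ 2 - Polynomial.C γ * Polynomial.X + 1)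
        + Polynomial.aeval (X 1)
          (Polynomial.C s * (Polynomial.C δ * Polynomial.X ^ 2 - 1)
            + Polynomial.C (t * δ) * (Polynomial.C γ * Polynomial.X ^ 2
              - 2 * Polynomial.X)) := by
  simp only [chartRel₁, map_add, map_sub, map_mul, map_pow, map_one, map_ofNat,
    Polynomial.aeval_C, Polynomial.aeval_X, MvPolynomial.algebraMap_eq, add_assoc]

theorem stmt17_general (g h : Polynomial A) {r : MvPolynomial (Fin 2) A}
    (hr : r = X 0 * Polynomial.aeval (X 1) g + Polynomial.aeval (X 1) h) :
    ∃ e : Localization.Away (Ideal.Quotient.mk (Ideal.span {r}) (Polynomial.aeval (X 1) g)) ≃+*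
        Localization.Away g,
      ∀ p : Polynomial A,
        e (algebraMap _ _ (Ideal.Quotient.mk (Ideal.span {r}) (Polynomial.aeval (X 1) p))) =
          algebraMap (Polynomial A) _ p := by
  subst hr
  obtain ⟨e⟩ := nonempty_localizationAway_adjoinRoot_linear_algEquiv g h
  let q := (adjoinRootLinearEquiv g h).symm
  have hq (p : Polynomial A) :
      q (Ideal.Quotient.mk _ (Polynomial.aeval (X 1) p)) = AdjoinRoot.of _ p := by
    rw [RingEquiv.symm_apply_eq, adjoinRootLinearEquiv_of]
  have hpowers : (Submonoid.powers (Ideal.Quotient.mk _ (Polynomial.aeval (X 1) g))).map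
      q.toMonoidHom = Submonoid.powers (AdjoinRoot.of _ g) :=
    (Submonoid.map_powers q.toMonoidHom _).trans (congrArg Submonoid.powers (hq g))
  refine ⟨(IsLocalization.ringEquivOfRingEquiv _ _ q hpowers).trans e.toRingEquiv, fun p => ?_⟩
  rw [RingEquiv.trans_apply, IsLocalization.ringEquivOfRingEquiv_eq, hq]
  exact e.commutes p

end Chart

/-- Inverting (the image of) `δx² - γx + 1` in `R₁` yields the localization of the
one-variable polynomial ring `A[x]` away from `δx² - γx + 1`, compatibly with the
`A[x]`-algebra structures:
`R₁[(δx² - γx + 1)⁻¹] ≅ A[x][(δx² - γx + 1)⁻¹]` as `A[x]`-algebras. -/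
theorem stmt17 {A : Type*} [CommRing A] (γ δ s t : A) :
    ∃ e : Localization.Away (chartMap₁ A γ δ s t
            (Polynomial.C δ * Polynomial.X ^ 2 - Polynomial.C γ * Polynomial.X + 1))
          ≃+* Localization.Away
            (Polynomial.C δ * Polynomial.X ^ 2 - Polynomial.C γ * Polynomial.X + 1 :
              Polynomial A),
      ∀ p : Polynomial A,
        e (algebraMap (ChartRing₁ A γ δ s t) _ (chartMap₁ A γ δ s t p))
          = algebraMap (Polynomial A) _ p := by
  exact stmt17_general _ _ (chartRel₁_eq γ δ s t)
end
end
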